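/- Let (J₁, B₁) be a pseudo-euclidean Jordan algebra over a field K of characteristic zero, J₂ a Jordan algebra over K, and π : J₂ → End(J₁) an admissible representation such that each π(x) is B₁-symmetric (B₁(π(x)y, y') = B₁(y, π(x)y') for all y, y'). Define the symmetric bilinear map φ : J₁ × J₁ → J₂* by φ(y, y')(x) = B₁(π(x)y, y'). Then the vector space J̃ = J₂ ⊕ J₁ ⊕ J₂* endowed with the product (x + y + f)(x' + y' + f') = xx' + yy' + π(x)y' + π(x')y + f'∘R_x + f∘R_{x'} + φ(y, y') (for x, x' ∈ J₂, y, y' ∈ J₁, f, f' ∈ J₂*, where R_x denotes multiplication by x in J₂) is a Jordan algebra; moreover, for every symmetric associative bilinear form γ on J₂, the bilinear form B_γ(x + y + f, x' + y' + f') = γ(x, x') + B₁(y, y') + f(x') + f'(x) is an associative scalar product on J̃. -/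

import Mathlib

variable {K : Type*} [Field K] [CharZero K]
variable {J₁ : Type*} [NonUnitalNonAssocCommRing J₁] [Module K J₁]
  [SMulCommClass K J₁ J₁] [IsScalarTower K J₁ J₁] [FiniteDimensional K J₁]
variable {J₂ : Type*} [NonUnitalNonAssocCommRing J₂] [Module K J₂]
  [SMulCommClass K J₂ J₂] [IsScalarTower K J₂ J₂] [FiniteDimensional K J₂]

/-- The map `φ : J₁ × J₁ → J₂*`, `φ(y, y')(x) = B₁(π(x)y, y')`. -/
def phiMap (B₁ : J₁ →ₗ[K] J₁ →ₗ[K] K) (π : J₂ →ₗ[K] Module.End K J₁)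
    (y y' : J₁) : Module.Dual K J₂ where
  toFun x := B₁ (π x y) y'
  map_add' a b := by simp
  map_smul' c a := by simp

/-- The double extension product on `J₂ ⊕ J₁ ⊕ J₂*`:
`(x + y + f)(x' + y' + f') = xx' + (yy' + π(x)y' + π(x')y) + (f'∘R_x + f∘R_{x'} + φ(y, y'))`. -/
noncomputable def deMul (B₁ : J₁ →ₗ[K] J₁ →ₗ[K] K) (π : J₂ →ₗ[K] Module.End K J₁)
    (p q : J₂ × J₁ × Module.Dual K J₂) : J₂ × J₁ × Module.Dual K J₂ :=
  (p.1 * q.1,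
    p.2.1 * q.2.1 + π p.1 q.2.1 + π q.1 p.2.1,
    q.2.2.comp (LinearMap.mulLeft K p.1) + p.2.2.comp (LinearMap.mulLeft K q.1) +
      phiMap B₁ π p.2.1 q.2.1)

/-- The bilinear form `B_γ(x+y+f, x'+y'+f') = γ(x,x') + B₁(y,y') + f(x') + f'(x)`. -/
noncomputable def deForm (B₁ : J₁ →ₗ[K] J₁ →ₗ[K] K) (γ : J₂ →ₗ[K] J₂ →ₗ[K] K)
    (p q : J₂ × J₁ × Module.Dual K J₂) : K :=
  γ p.1 q.1 + B₁ p.2.1 q.2.1 + p.2.2 q.1 + q.2.2 p.1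

/-- The linearised Jordan identity. -/
theorem jordan_linearized {A : Type*} [NonUnitalNonAssocCommRing A]
    (h2 : ∀ a : A, a + a = 0 → a = 0)
    (h : ∀ x y : A, (x * y) * (x * x) = x * (y * (x * x))) (x v w : A) :
    (v * w) * (x * x) + 2 • ((x * w) * (x * v)) =
      v * (w * (x * x)) + 2 • (x * (w * (x * v))) := by
  have hp := h (x + v) w
  have hm := h (x - v) w
  have hv := h v w
  simp only [add_mul, mul_add, sub_mul, mul_sub, mul_comm v x] at hp hm
  rw [← sub_eq_zero]
  apply h2
  linear_combination (norm := abel) hp - hm - 2 • hv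

section General

variable {K : Type*} [Field K] {J₁ : Type*} [NonUnitalNonAssocCommRing J₁] [Module K J₁]
  {J₂ : Type*} [NonUnitalNonAssocCommRing J₂] [Module K J₂]

/-- A representation intertwines the inner derivations `[L_y, L_w]` with `[π y, π w]`. -/
theorem rep_double_commutator [CharZero K]
    (π : J₂ →ₗ[K] Module.End K J₁)
    (hrep2 : ∀ x y : J₂,
      2 • (π (x * y) * π x) + π (x * x) * π y - 2 • (π x * (π y * π x)) -
          π ((x * x) * y) = 0) (x y w : J₂) :
    π x * (π y * π w) - π x * (π w * π y) - π y * (π w * π x) + π w * (π y * π x) =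
      π ((x * y) * w) - π ((x * w) * y) := by
  have polar : ∀ a b c : J₂, π (a * b) * π c + π (c * b) * π a + π (a * c) * π b
      - π a * (π b * π c) - π c * (π b * π a) - π ((a * c) * b) = 0 := by
    intro a b c
    have hs := hrep2 (a + c) b
    have ha := hrep2 a b
    have hc := hrep2 c b
    simp only [add_mul, mul_add, map_add, mul_comm c a] at hs
    linear_combination (norm := module) (2⁻¹ : K) • (hs - ha - hc)
  have h1 := polar x y w
  have h2 := polar x w y
  rw [mul_comm w y] at h1
  linear_combination (norm := module) h2 - h1

theorem deMul_comm [SMulCommClass K J₂ J₂]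
    (B₁ : J₁ →ₗ[K] J₁ →ₗ[K] K) (hsymm : ∀ x y : J₁, B₁ x y = B₁ y x)
    (π : J₂ →ₗ[K] Module.End K J₁)
    (hπsymm : ∀ (x : J₂) (y y' : J₁), B₁ (π x y) y' = B₁ y (π x y'))
    (p q : J₂ × J₁ × Module.Dual K J₂) : deMul B₁ π p q = deMul B₁ π q p := by
  refine Prod.ext (mul_comm _ _) (Prod.ext ?_ (LinearMap.ext fun z => ?_))
  · simp only [deMul, mul_comm q.2.1]
    abel
  · simp only [deMul, phiMap, LinearMap.add_apply, LinearMap.comp_apply, LinearMap.mulLeft_apply,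
      LinearMap.coe_mk, AddHom.coe_mk]
    rw [hπsymm, hsymm p.2.1]
    ring

theorem deForm_symm (B₁ : J₁ →ₗ[K] J₁ →ₗ[K] K) (hsymm : ∀ x y : J₁, B₁ x y = B₁ y x)
    (γ : J₂ →ₗ[K] J₂ →ₗ[K] K) (hγ : ∀ x y : J₂, γ x y = γ y x)
    (p q : J₂ × J₁ × Module.Dual K J₂) : deForm B₁ γ p q = deForm B₁ γ q p := by
  simp only [deForm]
  rw [hγ, hsymm]
  ring

theorem deForm_nondegenerate [FiniteDimensional K J₂]
    (B₁ : J₁ →ₗ[K] J₁ →ₗ[K] K)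
    (hnondeg : ∀ x : J₁, (∀ y : J₁, B₁ x y = 0) → x = 0) (γ : J₂ →ₗ[K] J₂ →ₗ[K] K)
    (p : J₂ × J₁ × Module.Dual K J₂) (hp : ∀ q, deForm B₁ γ p q = 0) : p = 0 := by
  obtain ⟨x, y, f⟩ := p
  have hx : x = 0 := (Module.forall_dual_apply_eq_zero_iff K x).1 fun g => by
    simpa [deForm] using hp (0, 0, g)
  have hy : y = 0 := hnondeg y fun y' => by simpa [deForm] using hp (0, y', 0)
  have hf : f = 0 := LinearMap.ext fun z => by simpa [deForm, hx] using hp (z, 0, 0)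
  simp [hx, hy, hf]

theorem deForm_deMul [SMulCommClass K J₂ J₂]
    (B₁ : J₁ →ₗ[K] J₁ →ₗ[K] K)
    (hsymm : ∀ x y : J₁, B₁ x y = B₁ y x)
    (hassoc : ∀ x y z : J₁, B₁ (x * y) z = B₁ x (y * z))
    (π : J₂ →ₗ[K] Module.End K J₁)
    (hπsymm : ∀ (x : J₂) (y y' : J₁), B₁ (π x y) y' = B₁ y (π x y'))
    (γ : J₂ →ₗ[K] J₂ →ₗ[K] K) (hγ : ∀ x y z : J₂, γ (x * y) z = γ x (y * z))
    (p q s : J₂ × J₁ × Module.Dual K J₂) :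
    deForm B₁ γ (deMul B₁ π p q) s = deForm B₁ γ p (deMul B₁ π q s) := by
  simp only [deForm, deMul, phiMap, LinearMap.add_apply, LinearMap.comp_apply,
    LinearMap.mulLeft_apply, LinearMap.coe_mk, AddHom.coe_mk, map_add, hγ, hassoc, hπsymm,
    mul_comm q.1 p.1, mul_comm s.1 p.1]
  rw [hsymm q.2.1 (π p.1 s.2.1), hπsymm, hsymm s.2.1]
  ring

/-- Associative forms turn the Jordan defect into a skew-symmetric operator. -/
theorem deForm_jordan_defect [SMulCommClass K J₂ J₂]
    (B₁ : J₁ →ₗ[K] J₁ →ₗ[K] K)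
    (hsymm : ∀ x y : J₁, B₁ x y = B₁ y x)
    (hassoc : ∀ x y z : J₁, B₁ (x * y) z = B₁ x (y * z))
    (π : J₂ →ₗ[K] Module.End K J₁)
    (hπsymm : ∀ (x : J₂) (y y' : J₁), B₁ (π x y) y' = B₁ y (π x y'))
    (p q s : J₂ × J₁ × Module.Dual K J₂) :
    deForm B₁ 0 (deMul B₁ π (deMul B₁ π p q) (deMul B₁ π p p)) s =
        deForm B₁ 0 q (deMul B₁ π p (deMul B₁ π s (deMul B₁ π p p))) ∧
      deForm B₁ 0 (deMul B₁ π p (deMul B₁ π q (deMul B₁ π p p))) s =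
        deForm B₁ 0 q (deMul B₁ π (deMul B₁ π p s) (deMul B₁ π p p)) := by
  have hc := deMul_comm B₁ hsymm π hπsymm
  have ha := deForm_deMul B₁ hsymm hassoc π hπsymm 0 (by simp)
  constructor
  · rw [ha, hc p q, ha, hc s]
  · rw [hc p, ha, ha, hc (deMul B₁ π p s)]

/-- The Jordan identity of the double extension holds modulo the dual summand. -/
theorem deMul_jordan_snd [SMulCommClass K J₂ J₂]
    (hjordan₁ : ∀ x y : J₁, (x * y) * (x * x) = x * (y * (x * x)))
    (B₁ : J₁ →ₗ[K] J₁ →ₗ[K] K) (π : J₂ →ₗ[K] Module.End K J₁)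
    (hrep1 : ∀ x : J₂, π (x * x) * π x = π x * π (x * x))
    (hrep2 : ∀ x y : J₂,
      2 • (π (x * y) * π x) + π (x * x) * π y - 2 • (π x * (π y * π x)) -
          π ((x * x) * y) = 0)
    (hadm1 : ∀ (x : J₂) (y y' : J₁),
      π (x * x) (y * y') + 2 • (π x y' * π x y) + π x y' * (y * y) +
          2 • ((y * y') * π x y) =
        2 • π x (y' * π x y) + π x (y' * (y * y)) + π (x * x) y' * y +
          2 • ((y' * π x y) * y))
    (hadm2 : ∀ (x : J₂) (y : J₁), π x y * (y * y) = π x (y * y) * y)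
    (hadm3 : ∀ (x x' : J₂) (y : J₁),
      π (x * x') (y * y) + 2 • (π x' y * π x y) =
        π x (π x' (y * y)) + 2 • (π x' (π x y) * y))
    (p q : J₂ × J₁ × Module.Dual K J₂) :
    (deMul B₁ π (deMul B₁ π p q) (deMul B₁ π p p)).2.1 =
      (deMul B₁ π p (deMul B₁ π q (deMul B₁ π p p))).2.1 := by
  obtain ⟨x, y, f⟩ := p
  obtain ⟨x', y', f'⟩ := q
  have h1 := LinearMap.congr_fun (hrep1 x) y'
  have h2 := LinearMap.congr_fun (hrep2 x x') y
  simp only [Module.End.mul_apply, LinearMap.add_apply, LinearMap.sub_apply, LinearMap.smul_apply,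
    LinearMap.zero_apply, mul_comm (x * x) x'] at h1 h2
  have h3 := hadm1 x y y'
  have h4 := hadm2 x' y
  have h5 := hadm3 x x' y
  simp only [mul_comm _ y] at h3 h4 h5
  simp only [deMul, mul_add, add_mul, map_add]
  rw [hjordan₁]
  linear_combination (norm := module) h1 + h2 + h3 + h4 + h5

/-- The dual component of the Jordan identity of the double extension against `J₂`. -/
theorem deMul_jordan_dual [CharZero K] [SMulCommClass K J₂ J₂]
    (hjordan₂ : ∀ x y : J₂, (x * y) * (x * x) = x * (y * (x * x)))
    (B₁ : J₁ →ₗ[K] J₁ →ₗ[K] K)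
    (hsymm : ∀ x y : J₁, B₁ x y = B₁ y x)
    (hassoc : ∀ x y z : J₁, B₁ (x * y) z = B₁ x (y * z))
    (π : J₂ →ₗ[K] Module.End K J₁)
    (hrep2 : ∀ x y : J₂,
      2 • (π (x * y) * π x) + π (x * x) * π y - 2 • (π x * (π y * π x)) -
          π ((x * x) * y) = 0)
    (hadm3 : ∀ (x x' : J₂) (y : J₁),
      π (x * x') (y * y) + 2 • (π x' y * π x y) =
        π x (π x' (y * y)) + 2 • (π x' (π x y) * y))
    (hπsymm : ∀ (x : J₂) (y y' : J₁), B₁ (π x y) y' = B₁ y (π x y'))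
    (p : J₂ × J₁ × Module.Dual K J₂) (x' : J₂) :
    (deMul B₁ π (deMul B₁ π p (x', 0, 0)) (deMul B₁ π p p)).2.2 =
      (deMul B₁ π p (deMul B₁ π (x', 0, 0) (deMul B₁ π p p))).2.2 := by
  obtain ⟨x, y, f⟩ := p
  ext z
  have h2 : ∀ a : J₂, a + a = 0 → a = 0 := fun a ha => by
    linear_combination (norm := module) (2⁻¹ : K) • ha
  -- the terms containing `f`
  have hf := congrArg f (congrArg₂ (· - ·) (jordan_linearized h2 hjordan₂ x z x')
    (jordan_linearized h2 hjordan₂ x x' z))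
  rw [mul_comm x' z, mul_comm (x * z)] at hf
  simp only [map_sub, map_add, map_nsmul] at hf
  -- the terms cubic in `y`
  have hy : B₁ y (π x' (π z (y * y))) = B₁ y (π z (π x' (y * y))) := by
    have h := congrArg (B₁ y) (congrArg₂ (· - ·) (hadm3 x' z y) (hadm3 z x' y))
    have e : ∀ a b : J₂, B₁ y (π a (π b y) * y) = B₁ y (π b (π a (y * y))) := fun a b => by
      rw [mul_comm, ← hassoc, ← hπsymm, ← hπsymm, hsymm]
    rw [mul_comm z x', mul_comm (π z y)] at h
    simp only [map_sub, map_add, map_nsmul, e] at h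
    linear_combination (-3⁻¹ : K) * h
  -- the terms quadratic in `y`
  have hq := congrArg (B₁ y) (LinearMap.congr_fun (rep_double_commutator π hrep2 x z x') y)
  simp only [Module.End.mul_apply, LinearMap.add_apply, LinearMap.sub_apply, map_sub,
    map_add] at hq
  have flip : ∀ a b c : J₂, B₁ y (π a (π b (π c y))) = B₁ y (π c (π b (π a y))) := fun a b c => by
    rw [← hπsymm, ← hπsymm, ← hπsymm, hsymm]
  rw [flip x z x', flip x x' z, mul_comm (x * z) x'] at hq
  rw [mul_comm z (x' * (x * x)), mul_comm z (x * x), mul_comm z (x * x')] at hf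
  simp only [deMul, phiMap, LinearMap.add_apply, LinearMap.comp_apply, LinearMap.mulLeft_apply,
    LinearMap.coe_mk, AddHom.coe_mk, map_add, map_zero, mul_zero, zero_mul, LinearMap.zero_apply,
    hπsymm]
  linear_combination hf + hy + hq

end General

/-- double extension: if `(J₁, B₁)` is pseudo-euclidean, `J₂` is a Jordan
algebra and `π : J₂ → End(J₁)` is an admissible representation by `B₁`-symmetric operators,
then `J₂ ⊕ J₁ ⊕ J₂*` with the product `deMul` is a Jordan algebra, and for every symmetric
associative bilinear form `γ` on `J₂` the form `B_γ` is an associative scalar product. -/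
theorem double_extension_jordan
    (hjordan₁ : ∀ x y : J₁, (x * y) * (x * x) = x * (y * (x * x)))
    (hjordan₂ : ∀ x y : J₂, (x * y) * (x * x) = x * (y * (x * x)))
    (B₁ : J₁ →ₗ[K] J₁ →ₗ[K] K)
    (hsymm : ∀ x y : J₁, B₁ x y = B₁ y x)
    (hnondeg : ∀ x : J₁, (∀ y : J₁, B₁ x y = 0) → x = 0)
    (hassoc : ∀ x y z : J₁, B₁ (x * y) z = B₁ x (y * z))
    (π : J₂ →ₗ[K] Module.End K J₁)
    -- `π` is a representation
    (hrep1 : ∀ x : J₂, π (x * x) * π x = π x * π (x * x))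
    (hrep2 : ∀ x y : J₂,
      2 • (π (x * y) * π x) + π (x * x) * π y - 2 • (π x * (π y * π x)) -
          π ((x * x) * y) = 0)
    -- `π` is admissible
    (hadm1 : ∀ (x : J₂) (y y' : J₁),
      π (x * x) (y * y') + 2 • (π x y' * π x y) + π x y' * (y * y) +
          2 • ((y * y') * π x y) =
        2 • π x (y' * π x y) + π x (y' * (y * y)) + π (x * x) y' * y +
          2 • ((y' * π x y) * y))
    (hadm2 : ∀ (x : J₂) (y : J₁), π x y * (y * y) = π x (y * y) * y)
    (hadm3 : ∀ (x x' : J₂) (y : J₁),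
      π (x * x') (y * y) + 2 • (π x' y * π x y) =
        π x (π x' (y * y)) + 2 • (π x' (π x y) * y))
    -- each `π x` is `B₁`-symmetric
    (hπsymm : ∀ (x : J₂) (y y' : J₁), B₁ (π x y) y' = B₁ y (π x y')) :
    -- the product makes `J₂ ⊕ J₁ ⊕ J₂*` a Jordan algebra
    ((∀ p q : J₂ × J₁ × Module.Dual K J₂, deMul B₁ π p q = deMul B₁ π q p) ∧
      (∀ p q : J₂ × J₁ × Module.Dual K J₂,
        deMul B₁ π (deMul B₁ π p q) (deMul B₁ π p p) =
          deMul B₁ π p (deMul B₁ π q (deMul B₁ π p p)))) ∧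
    -- for every symmetric associative `γ` on `J₂`, `B_γ` is an associative scalar product
    (∀ γ : J₂ →ₗ[K] J₂ →ₗ[K] K,
      (∀ x y : J₂, γ x y = γ y x) → (∀ x y z : J₂, γ (x * y) z = γ x (y * z)) →
      ((∀ p q : J₂ × J₁ × Module.Dual K J₂, deForm B₁ γ p q = deForm B₁ γ q p) ∧
        (∀ p : J₂ × J₁ × Module.Dual K J₂, (∀ q, deForm B₁ γ p q = 0) → p = 0) ∧
        (∀ p q s : J₂ × J₁ × Module.Dual K J₂,
          deForm B₁ γ (deMul B₁ π p q) s = deForm B₁ γ p (deMul B₁ π q s)))) := by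
  have hsnd := deMul_jordan_snd hjordan₁ B₁ π hrep1 hrep2 hadm1 hadm2 hadm3
  have hdual := deMul_jordan_dual hjordan₂ B₁ hsymm hassoc π hrep2 hadm3 hπsymm
  refine ⟨⟨deMul_comm B₁ hsymm π hπsymm, fun p q => ?_⟩, fun γ hγs hγa =>
    ⟨deForm_symm B₁ hsymm γ hγs, deForm_nondegenerate B₁ hnondeg γ,
      deForm_deMul B₁ hsymm hassoc π hπsymm γ hγa⟩⟩
  refine Prod.ext (hjordan₂ _ _) (Prod.ext (hsnd p q) (LinearMap.ext fun z => ?_))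
  have hz : deMul B₁ π (deMul B₁ π p (z, 0, 0)) (deMul B₁ π p p) =
      deMul B₁ π p (deMul B₁ π (z, 0, 0) (deMul B₁ π p p)) :=
    Prod.ext (hjordan₂ _ _) (Prod.ext (hsnd p _) (hdual p z))
  obtain ⟨hl, hr⟩ := deForm_jordan_defect B₁ hsymm hassoc π hπsymm p q (z, 0, 0)
  rw [hz, ← hl] at hr
  simpa [deForm] using hr.symm
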